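/- arXiv:2012.13596 — 4 statements merged into one kernel-verified Lean document; each statement's English description precedes it below -/
import Mathlib

section
/- Let ξ ∈ ℝ², ψ ∈ ℝ with ψ > 0, and p ∈ ℝ²; set χ := ψ − p·ξ, a² := |p|² + χ² − 1, and assume a² > 0. Let M := a²(I₂ + ξξᵀ) − (p − χξ)(p − χξ)ᵀ be the coefficient matrix of the principal part of the conical Chaplygin potential equation. Then: (i) the algebraic identity (p − χξ)ᵀ(I₂ + ξξᵀ)⁻¹(p − χξ) = |p|² + χ² − ψ²/(1+|ξ|²) holds; (ii) M is positive definite if and only if ψ > √(1+|ξ|²); (iii) M is singular if and only if ψ = √(1+|ξ|²); (iv) M has a negative eigenvalue if and only if ψ < √(1+|ξ|²). -/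
open Real Matrix

/-!
With `P = 1 + ξξᵀ`, which is positive definite, and `q = p − χξ`, the type of `a²P − qqᵀ` is decided
by the sign of `a² − s`, where `s = qᵀP⁻¹q`, in every dimension. Cauchy–Schwarz for `P` gives
`vᵀ(a²P − qqᵀ)v ≥ (a² − s) vᵀPv`, the direction `v = P⁻¹q` gives the value `s(a² − s)`, and the
matrix determinant lemma gives `det (a²P − qqᵀ) = det (a²P) (1 − s/a²)`. Inverting `P` by the
Sherman–Morrison formula yields `a² − s = ψ²/(1+|ξ|²) − 1`.
-/

section CommRing

variable {R n : Type*} [CommRing R] [Fintype n]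

theorem dotProduct_smul_sub_vecMulVec_mulVec (P : Matrix n n R) (a : R) (q v : n → R) :
    v ⬝ᵥ ((a • P - vecMulVec q q) *ᵥ v) = a * (v ⬝ᵥ (P *ᵥ v)) - (q ⬝ᵥ v) ^ 2 := by
  simp only [sub_mulVec, smul_mulVec, vecMulVec_mulVec, dotProduct_sub, dotProduct_smul,
    smul_eq_mul, op_smul_eq_mul, dotProduct_comm v q]
  ring

variable [DecidableEq n] {A : Matrix n n R}

theorem mulVec_inv_mulVec (hA : IsUnit A.det) (v : n → R) : A *ᵥ (A⁻¹ *ᵥ v) = v := by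
  rw [mulVec_mulVec, mul_nonsing_inv A hA, one_mulVec]

theorem dotProduct_smul_sub_vecMulVec_mulVec_inv_mulVec (hA : IsUnit A.det) (a : R) (q : n → R) :
    (A⁻¹ *ᵥ q) ⬝ᵥ ((a • A - vecMulVec q q) *ᵥ (A⁻¹ *ᵥ q)) =
      (q ⬝ᵥ (A⁻¹ *ᵥ q)) * (a - q ⬝ᵥ (A⁻¹ *ᵥ q)) := by
  rw [dotProduct_smul_sub_vecMulVec_mulVec, mulVec_inv_mulVec hA, dotProduct_comm _ q]
  ring

theorem det_add_vecMulVec (hA : IsUnit A.det) (u v : n → R) :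
    (A + vecMulVec u v).det = A.det * (1 + v ⬝ᵥ (A⁻¹ *ᵥ u)) := by
  rw [vecMulVec_eq Unit, det_add_replicateCol_mul_replicateRow hA, Matrix.mul_assoc,
    ← replicateCol_mulVec, det_unique (n := Unit), Matrix.add_apply, one_apply_eq,
    replicateRow_mul_replicateCol_apply]

end CommRing

section Field

variable {K n : Type*} [Field K] [Fintype n] [DecidableEq n]

theorem inv_add_vecMulVec {A : Matrix n n K} (hA : IsUnit A.det) {u v : n → K}
    (huv : 1 + v ⬝ᵥ (A⁻¹ *ᵥ u) ≠ 0) :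
    (A + vecMulVec u v)⁻¹ =
      A⁻¹ - (1 + v ⬝ᵥ (A⁻¹ *ᵥ u))⁻¹ • vecMulVec (A⁻¹ *ᵥ u) (v ᵥ* A⁻¹) := by
  have hAw : A *ᵥ (A⁻¹ *ᵥ u) = u := mulVec_inv_mulVec hA u
  set w := A⁻¹ *ᵥ u
  refine inv_eq_right_inv ?_
  calc (A + vecMulVec u v) * (A⁻¹ - (1 + v ⬝ᵥ w)⁻¹ • vecMulVec w (v ᵥ* A⁻¹))
      = 1 + (1 - (1 + v ⬝ᵥ w)⁻¹ * (1 + v ⬝ᵥ w)) • vecMulVec u (v ᵥ* A⁻¹) := by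
        simp only [add_mul, mul_sub, mul_smul_comm, mul_vecMulVec, vecMulVec_mul,
          mul_nonsing_inv A hA, vecMulVec_mulVec, op_smul_eq_smul, smul_vecMulVec, hAw]
        module
    _ = 1 := by rw [inv_mul_cancel₀ huv, sub_self, zero_smul, add_zero]

theorem det_smul_sub_vecMulVec_eq_zero_iff {P : Matrix n n K} (hP : IsUnit P.det) {a : K}
    (ha : a ≠ 0) (u v : n → K) :
    (a • P - vecMulVec u v).det = 0 ↔ v ⬝ᵥ (P⁻¹ *ᵥ u) = a := by
  have haP : IsUnit (a • P).det := by
    rw [det_smul]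
    exact (ha.isUnit.pow _).mul hP
  have hinv : (a • P)⁻¹ = a⁻¹ • P⁻¹ := inv_smul' P (Units.mk0 a ha) hP
  rw [sub_eq_add_neg, ← neg_vecMulVec, det_add_vecMulVec haP, mul_eq_zero, or_iff_right haP.ne_zero,
    hinv, mulVec_neg, dotProduct_neg, smul_mulVec, dotProduct_smul, smul_eq_mul, ← sub_eq_add_neg,
    sub_eq_zero, eq_comm, inv_mul_eq_one₀ ha, eq_comm]

theorem dotProduct_inv_one_add_vecMulVec_mulVec {ξ : n → K} (hξ : 1 + ξ ⬝ᵥ ξ ≠ 0) (q : n → K) :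
    q ⬝ᵥ ((1 + vecMulVec ξ ξ)⁻¹ *ᵥ q) = q ⬝ᵥ q - (q ⬝ᵥ ξ) ^ 2 / (1 + ξ ⬝ᵥ ξ) := by
  rw [inv_add_vecMulVec (by simp) (by simpa using hξ)]
  simp only [inv_one, one_mulVec, vecMul_one, sub_mulVec, smul_mulVec, vecMulVec_mulVec,
    dotProduct_sub, dotProduct_smul, smul_eq_mul, op_smul_eq_mul, dotProduct_comm ξ q]
  ring

theorem dotProduct_inv_one_add_vecMulVec_mulVec_sub_smul {ξ : n → K} (hξ : 1 + ξ ⬝ᵥ ξ ≠ 0)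
    (p : n → K) (χ : K) :
    (p - χ • ξ) ⬝ᵥ ((1 + vecMulVec ξ ξ)⁻¹ *ᵥ (p - χ • ξ)) =
      p ⬝ᵥ p + χ ^ 2 - (χ + p ⬝ᵥ ξ) ^ 2 / (1 + ξ ⬝ᵥ ξ) := by
  rw [dotProduct_inv_one_add_vecMulVec_mulVec hξ]
  simp only [sub_dotProduct, dotProduct_sub, smul_dotProduct, dotProduct_smul, smul_eq_mul,
    dotProduct_comm ξ p]
  field_simp
  ring

end Field

theorem sq_dotProduct_mulVec_le {R n : Type*} [CommRing R] [LinearOrder R] [IsStrictOrderedRing R]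
    [StarRing R] [TrivialStar R] [Fintype n] {P : Matrix n n R} (hP : P.PosSemidef) (v w : n → R) :
    (v ⬝ᵥ (P *ᵥ w)) ^ 2 ≤ (v ⬝ᵥ (P *ᵥ v)) * (w ⬝ᵥ (P *ᵥ w)) := by
  classical
  have hnonneg (x : n → R) : 0 ≤ toBilin' P x x := by
    simpa [toBilin'_apply'] using hP.dotProduct_mulVec_nonneg x
  have hsymm : P.IsSymm :=
    (conjTranspose_eq_transpose_of_trivial P).symm.trans hP.isHermitian.eq
  simpa only [toBilin'_apply'] using
    (toBilin' P).apply_sq_le_of_symm hnonneg ⟨(isSymm_toBilin'_iff_isSymm.2 hsymm).eq⟩ v w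

section PosDef

variable {K n : Type*} [Field K] [LinearOrder K] [IsStrictOrderedRing K] [StarRing K]
  [TrivialStar K] [Fintype n] [DecidableEq n] {P : Matrix n n K}

theorem sq_dotProduct_le_dotProduct_inv_mulVec_mul (hP : P.PosDef) (q v : n → K) :
    (q ⬝ᵥ v) ^ 2 ≤ (q ⬝ᵥ (P⁻¹ *ᵥ q)) * (v ⬝ᵥ (P *ᵥ v)) := by
  have hdet : IsUnit P.det := (isUnit_iff_isUnit_det P).1 hP.isUnit
  have hcs := sq_dotProduct_mulVec_le hP.posSemidef v (P⁻¹ *ᵥ q)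
  rwa [mulVec_inv_mulVec hdet, dotProduct_comm v q, dotProduct_comm _ q, mul_comm] at hcs

theorem sub_mul_le_dotProduct_smul_sub_vecMulVec_mulVec (hP : P.PosDef) (a : K) (q v : n → K) :
    (a - q ⬝ᵥ (P⁻¹ *ᵥ q)) * (v ⬝ᵥ (P *ᵥ v)) ≤ v ⬝ᵥ ((a • P - vecMulVec q q) *ᵥ v) := by
  rw [dotProduct_smul_sub_vecMulVec_mulVec, sub_mul]
  exact sub_le_sub_left (sq_dotProduct_le_dotProduct_inv_mulVec_mul hP q v) _

theorem posDef_smul_sub_vecMulVec_iff (hP : P.PosDef) {a : K} (ha : 0 < a) (q : n → K) :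
    (a • P - vecMulVec q q).PosDef ↔ q ⬝ᵥ (P⁻¹ *ᵥ q) < a := by
  have hdet : IsUnit P.det := (isUnit_iff_isUnit_det P).1 hP.isUnit
  constructor
  · intro hM
    obtain rfl | hq := eq_or_ne q 0
    · simpa using ha
    have hs : 0 < q ⬝ᵥ (P⁻¹ *ᵥ q) := by simpa using hP.inv.dotProduct_mulVec_pos hq
    have hw : P⁻¹ *ᵥ q ≠ 0 := fun h ↦ by simp [h] at hs
    have hpos := hM.dotProduct_mulVec_pos hw
    rw [star_trivial, dotProduct_smul_sub_vecMulVec_mulVec_inv_mulVec hdet] at hpos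
    exact sub_pos.1 (pos_of_mul_pos_right hpos hs.le)
  · intro hs
    have hsymm : (a • P - vecMulVec q q).IsHermitian :=
      (hP.isHermitian.smul (.all a)).sub (by simp [IsHermitian])
    refine .of_dotProduct_mulVec_pos hsymm fun v hv ↦ ?_
    have hv' : 0 < v ⬝ᵥ (P *ᵥ v) := by simpa using hP.dotProduct_mulVec_pos hv
    rw [star_trivial]
    exact (mul_pos (sub_pos.2 hs) hv').trans_le
      (sub_mul_le_dotProduct_smul_sub_vecMulVec_mulVec hP a q v)

theorem exists_dotProduct_smul_sub_vecMulVec_mulVec_neg_iff (hP : P.PosDef) {a : K} (ha : 0 ≤ a)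
    (q : n → K) :
    (∃ v, v ≠ 0 ∧ v ⬝ᵥ ((a • P - vecMulVec q q) *ᵥ v) < 0) ↔ a < q ⬝ᵥ (P⁻¹ *ᵥ q) := by
  have hdet : IsUnit P.det := (isUnit_iff_isUnit_det P).1 hP.isUnit
  constructor
  · rintro ⟨v, hv, hneg⟩
    have hv' : 0 < v ⬝ᵥ (P *ᵥ v) := by simpa using hP.dotProduct_mulVec_pos hv
    have hprod := (sub_mul_le_dotProduct_smul_sub_vecMulVec_mulVec hP a q v).trans_lt hneg
    exact sub_neg.1 (neg_of_mul_neg_left hprod hv'.le)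
  · intro hs
    have hw : P⁻¹ *ᵥ q ≠ 0 := fun h ↦ by simp [h, ha.not_gt] at hs
    refine ⟨P⁻¹ *ᵥ q, hw, ?_⟩
    rw [dotProduct_smul_sub_vecMulVec_mulVec_inv_mulVec hdet]
    exact mul_neg_of_pos_of_neg (ha.trans_lt hs) (sub_neg.2 hs)

end PosDef

theorem posDef_one_add_vecMulVec_self {n : Type*} [Finite n] [DecidableEq n] (ξ : n → ℝ) :
    (1 + vecMulVec ξ ξ).PosDef :=
  PosDef.one.add_posSemidef (posSemidef_vecMulVec_self_star ξ)

theorem chaplygin_principal_part_classification_general {n : Type*} [Fintype n] [DecidableEq n]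
    (ξ p : n → ℝ) (ψ χ a2 : ℝ) (hχ : χ = ψ - p ⬝ᵥ ξ) (ha2def : a2 = p ⬝ᵥ p + χ ^ 2 - 1)
    (ha2 : 0 < a2) (q : n → ℝ) (hq : q = p - χ • ξ) (M0 M : Matrix n n ℝ)
    (hM0 : M0 = 1 + vecMulVec ξ ξ) (hM : M = a2 • M0 - vecMulVec q q) :
    q ⬝ᵥ (M0⁻¹ *ᵥ q) = p ⬝ᵥ p + χ ^ 2 - ψ ^ 2 / (1 + ξ ⬝ᵥ ξ) ∧
    (M.PosDef ↔ √(1 + ξ ⬝ᵥ ξ) < |ψ|) ∧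
    (M.det = 0 ↔ |ψ| = √(1 + ξ ⬝ᵥ ξ)) ∧
    ((∃ v, v ≠ 0 ∧ v ⬝ᵥ (M *ᵥ v) < 0) ↔ |ψ| < √(1 + ξ ⬝ᵥ ξ)) := by
  have hS : 0 < 1 + ξ ⬝ᵥ ξ := add_pos_of_pos_of_nonneg one_pos <| by
    simpa using dotProduct_star_self_nonneg ξ
  have hP : M0.PosDef := hM0 ▸ posDef_one_add_vecMulVec_self ξ
  have hid : q ⬝ᵥ (M0⁻¹ *ᵥ q) = p ⬝ᵥ p + χ ^ 2 - ψ ^ 2 / (1 + ξ ⬝ᵥ ξ) := by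
    rw [hq, hM0, dotProduct_inv_one_add_vecMulVec_mulVec_sub_smul hS.ne', hχ, sub_add_cancel]
  have hgap : q ⬝ᵥ (M0⁻¹ *ᵥ q) = a2 + 1 - ψ ^ 2 / (1 + ξ ⬝ᵥ ξ) := by rw [hid, ha2def]; ring
  refine ⟨hid, ?_, ?_, ?_⟩
  · rw [hM, posDef_smul_sub_vecMulVec_iff hP ha2, hgap, ← sqrt_sq_eq_abs,
      sqrt_lt_sqrt_iff hS.le, ← one_lt_div hS]
    constructor <;> intro <;> linarith
  · rw [hM, det_smul_sub_vecMulVec_eq_zero_iff hP.det_pos.ne'.isUnit ha2.ne', hgap,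
      ← sqrt_sq_eq_abs, sqrt_inj (sq_nonneg ψ) hS.le, ← div_eq_one_iff_eq hS.ne']
    constructor <;> intro <;> linarith
  · rw [hM, exists_dotProduct_smul_sub_vecMulVec_mulVec_neg_iff hP ha2.le, hgap,
      ← sqrt_sq_eq_abs, sqrt_lt_sqrt_iff (sq_nonneg ψ), ← div_lt_one hS]
    constructor <;> intro <;> linarith

/-- Type classification of the principal part of the conical Chaplygin potential
equation: with `χ = ψ − p·ξ`, `a² = |p|² + χ² − 1 > 0`, `q = p − χξ`, and
`M = a²(I₂ + ξξᵀ) − qqᵀ`, one has the identity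
`qᵀ(I₂+ξξᵀ)⁻¹q = |p|² + χ² − ψ²/(1+|ξ|²)`, and `M` is positive definite iff
`ψ > √(1+|ξ|²)` (elliptic), singular iff `ψ = √(1+|ξ|²)` (degenerate), and has a
negative eigenvalue iff `ψ < √(1+|ξ|²)` (hyperbolic). -/
theorem chaplygin_principal_part_classification
    (ξ p : Fin 2 → ℝ) (ψ χ a2 : ℝ) (hψ : 0 < ψ)
    (hχ : χ = ψ - (p 0 * ξ 0 + p 1 * ξ 1))
    (ha2def : a2 = (p 0) ^ 2 + (p 1) ^ 2 + χ ^ 2 - 1) (ha2 : 0 < a2)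
    (q : Fin 2 → ℝ) (hq : q = fun i => p i - χ * ξ i)
    (M0 M : Matrix (Fin 2) (Fin 2) ℝ)
    (hM0 : M0 = 1 + Matrix.vecMulVec ξ ξ)
    (hM : M = a2 • M0 - Matrix.vecMulVec q q) :
    (q ⬝ᵥ (M0⁻¹ *ᵥ q)
        = (p 0) ^ 2 + (p 1) ^ 2 + χ ^ 2 - ψ ^ 2 / (1 + (ξ 0) ^ 2 + (ξ 1) ^ 2)) ∧
    (M.PosDef ↔ Real.sqrt (1 + (ξ 0) ^ 2 + (ξ 1) ^ 2) < ψ) ∧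
    (M.det = 0 ↔ ψ = Real.sqrt (1 + (ξ 0) ^ 2 + (ξ 1) ^ 2)) ∧
    ((∃ v : Fin 2 → ℝ, v ≠ 0 ∧ v ⬝ᵥ (M *ᵥ v) < 0) ↔
      ψ < Real.sqrt (1 + (ξ 0) ^ 2 + (ξ 1) ^ 2)) := by
  simpa [dotProduct, sq, add_assoc, abs_of_pos hψ] using
    chaplygin_principal_part_classification_general ξ p ψ χ a2 (by simpa [dotProduct] using hχ)
      (by simpa [dotProduct, sq] using ha2def) ha2 q hq M0 M hM0 hM
end

section
/- Let ξ ∈ ℝ², ψ ∈ ℝ, and p ∈ ℝ² with ψ > √(1+|ξ|²); set χ := ψ − p·ξ and a² := |p|² + χ² − 1. Then a² > 0, and for every μ ∈ [0,1] the symmetric matrix a²(I₂ + ξξᵀ) − μ(p − χξ)(p − χξ)ᵀ is positive definite. In other words, at every point where ψ > √(1+|ξ|²), the equation ℱ(μ,ψ) = 0 is elliptic for every μ ∈ [0,1]. -/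
open Real Matrix

/-!
The 1-homogeneous function `Φ(x, t) = t ψ(x / t)` has gradient `P = (p, χ)` at the point
`X = (ξ, 1)`, and Euler's relation reads `⟪P, X⟫ = ψ`. Hence `a² = ‖P‖² - 1`, and the hypothesis on
`ψ` becomes `‖X‖ < ⟪P, X⟫`. A direction `v` lifts to the vector `V = (v, -⟪ξ, v⟫)` orthogonal to
`X`, for which `‖V‖² = ‖v‖² + ⟪ξ, v⟫²` and `⟪P, V⟫ = ⟪p - χ ξ, v⟫`. In the worst case `μ = 1`,
positivity of the principal part on `v` is thus `⟪P, V⟫² < (‖P‖² - 1) ‖V‖²`: Cauchy–Schwarz for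
`V` and the component of `P` orthogonal to `X`, whose squared norm is less than `‖P‖² - 1`.
-/

open scoped RealInnerProductSpace

section InnerProductSpace

variable {E : Type*} [NormedAddCommGroup E] [InnerProductSpace ℝ E]

theorem real_inner_sq_le_norm_sq_mul_norm_sq (x y : E) : ⟪x, y⟫ ^ 2 ≤ ‖x‖ ^ 2 * ‖y‖ ^ 2 := by
  simpa only [sq, real_inner_self_eq_norm_mul_norm] using real_inner_mul_inner_self_le x y

theorem one_lt_norm_sq_of_norm_sq_lt_inner_sq {p x : E} (h : ‖x‖ ^ 2 < ⟪p, x⟫ ^ 2) :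
    1 < ‖p‖ ^ 2 :=
  lt_of_mul_lt_mul_right
    (by simpa only [one_mul] using h.trans_le (real_inner_sq_le_norm_sq_mul_norm_sq p x))
    (sq_nonneg ‖x‖)

theorem norm_sub_inner_div_norm_sq_smul_sq (p x : E) :
    ‖p - (⟪p, x⟫ / ‖x‖ ^ 2) • x‖ ^ 2 = ‖p‖ ^ 2 - ⟪p, x⟫ ^ 2 / ‖x‖ ^ 2 := by
  obtain rfl | hx := eq_or_ne x 0
  · simp
  · have hx' : ‖x‖ ≠ 0 := norm_ne_zero_iff.mpr hx
    rw [norm_sub_sq_real, real_inner_smul_right, norm_smul, mul_pow, norm_eq_abs, sq_abs]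
    field_simp
    ring

theorem inner_sq_lt_norm_sq_sub_one_mul_norm_sq {p x v : E} (h : ‖x‖ ^ 2 < ⟪p, x⟫ ^ 2)
    (hxv : ⟪x, v⟫ = 0) (hv : v ≠ 0) : ⟪p, v⟫ ^ 2 < (‖p‖ ^ 2 - 1) * ‖v‖ ^ 2 := by
  have hx : x ≠ 0 := by
    rintro rfl
    simp at h
  have one_lt : 1 < ⟪p, x⟫ ^ 2 / ‖x‖ ^ 2 := (one_lt_div (by positivity)).mpr h
  calc ⟪p, v⟫ ^ 2
    _ = ⟪p - (⟪p, x⟫ / ‖x‖ ^ 2) • x, v⟫ ^ 2 := by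
      rw [inner_sub_left, real_inner_smul_left, hxv, mul_zero, sub_zero]
    _ ≤ ‖p - (⟪p, x⟫ / ‖x‖ ^ 2) • x‖ ^ 2 * ‖v‖ ^ 2 := real_inner_sq_le_norm_sq_mul_norm_sq _ _
    _ = (‖p‖ ^ 2 - ⟪p, x⟫ ^ 2 / ‖x‖ ^ 2) * ‖v‖ ^ 2 := by rw [norm_sub_inner_div_norm_sq_smul_sq]
    _ < (‖p‖ ^ 2 - 1) * ‖v‖ ^ 2 := by gcongr

end InnerProductSpace

section Cone

variable {E : Type*} [NormedAddCommGroup E]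

/-- The point `(ξ, 1)` of the ray on which the projective coordinate `x / t` of `(x, t)` is `ξ`. -/
noncomputable def conePoint (ξ : E) : WithLp 2 (E × ℝ) :=
  WithLp.toLp 2 (ξ, 1)

theorem norm_conePoint_sq (ξ : E) : ‖conePoint ξ‖ ^ 2 = 1 + ‖ξ‖ ^ 2 := by
  simp [conePoint, WithLp.prod_norm_sq_eq_of_L2, add_comm]

variable [InnerProductSpace ℝ E]

/-- The gradient `(p, χ)`, `χ = ψ - ⟪p, ξ⟫`, at `conePoint ξ` of the 1-homogeneous extension
`(x, t) ↦ t ψ(x / t)` of a function with value `ψ` and gradient `p` at `ξ`. -/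
noncomputable def coneGradient (ξ p : E) (ψ : ℝ) : WithLp 2 (E × ℝ) :=
  WithLp.toLp 2 (p, ψ - ⟪p, ξ⟫)

/-- The lift of the direction `v` at `ξ` to the orthogonal complement of `conePoint ξ`, normalized
to have first component `v`. -/
noncomputable def coneTangent (ξ v : E) : WithLp 2 (E × ℝ) :=
  WithLp.toLp 2 (v, -⟪ξ, v⟫)

theorem norm_coneGradient_sq (ξ p : E) (ψ : ℝ) :
    ‖coneGradient ξ p ψ‖ ^ 2 = ‖p‖ ^ 2 + (ψ - ⟪p, ξ⟫) ^ 2 := by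
  simp [coneGradient, WithLp.prod_norm_sq_eq_of_L2]

theorem norm_coneTangent_sq (ξ v : E) : ‖coneTangent ξ v‖ ^ 2 = ‖v‖ ^ 2 + ⟪ξ, v⟫ ^ 2 := by
  simp [coneTangent, WithLp.prod_norm_sq_eq_of_L2]

theorem coneTangent_ne_zero (ξ : E) {v : E} (hv : v ≠ 0) : coneTangent ξ v ≠ 0 :=
  fun h => hv (congrArg WithLp.fst h)

theorem inner_coneGradient_conePoint (ξ p : E) (ψ : ℝ) :
    ⟪coneGradient ξ p ψ, conePoint ξ⟫ = ψ := by
  simp [coneGradient, conePoint]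

theorem inner_conePoint_coneTangent (ξ v : E) : ⟪conePoint ξ, coneTangent ξ v⟫ = 0 := by
  simp [conePoint, coneTangent]

theorem inner_coneGradient_coneTangent (ξ p v : E) (ψ : ℝ) :
    ⟪coneGradient ξ p ψ, coneTangent ξ v⟫ = ⟪p - (ψ - ⟪p, ξ⟫) • ξ, v⟫ := by
  simp only [coneGradient, coneTangent, WithLp.prod_inner_apply, inner_sub_left,
    real_inner_smul_left, RCLike.inner_apply, conj_trivial]
  ring

theorem norm_conePoint_sq_lt_inner_coneGradient_sq {ξ : E} {ψ : ℝ} (h : 1 + ‖ξ‖ ^ 2 < ψ ^ 2)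
    (p : E) : ‖conePoint ξ‖ ^ 2 < ⟪coneGradient ξ p ψ, conePoint ξ⟫ ^ 2 := by
  rwa [norm_conePoint_sq, inner_coneGradient_conePoint]

theorem one_lt_norm_sq_add_sub_inner_sq {ξ : E} {ψ : ℝ} (h : 1 + ‖ξ‖ ^ 2 < ψ ^ 2) (p : E) :
    1 < ‖p‖ ^ 2 + (ψ - ⟪p, ξ⟫) ^ 2 := by
  rw [← norm_coneGradient_sq]
  exact one_lt_norm_sq_of_norm_sq_lt_inner_sq (norm_conePoint_sq_lt_inner_coneGradient_sq h p)

theorem inner_sub_smul_sq_lt {ξ v : E} {ψ : ℝ} (h : 1 + ‖ξ‖ ^ 2 < ψ ^ 2) (p : E) (hv : v ≠ 0) :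
    ⟪p - (ψ - ⟪p, ξ⟫) • ξ, v⟫ ^ 2 <
      (‖p‖ ^ 2 + (ψ - ⟪p, ξ⟫) ^ 2 - 1) * (‖v‖ ^ 2 + ⟪ξ, v⟫ ^ 2) := by
  rw [← inner_coneGradient_coneTangent, ← norm_coneGradient_sq, ← norm_coneTangent_sq]
  exact inner_sq_lt_norm_sq_sub_one_mul_norm_sq (norm_conePoint_sq_lt_inner_coneGradient_sq h p)
    (inner_conePoint_coneTangent ξ v) (coneTangent_ne_zero ξ hv)

end Cone

section PrincipalPart

theorem isHermitian_vecMulVec_self {ι R : Type*} [Mul R] [StarMul R] [TrivialStar R] (q : ι → R) :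
    (vecMulVec q q).IsHermitian := by
  rw [IsHermitian, conjTranspose_vecMulVec, star_trivial]

variable {ι : Type*} [Fintype ι]

theorem inner_toLp_toLp_eq_dotProduct (u v : ι → ℝ) :
    ⟪WithLp.toLp 2 u, WithLp.toLp 2 v⟫ = u ⬝ᵥ v := by
  rw [EuclideanSpace.inner_toLp_toLp, star_trivial, dotProduct_comm]

theorem norm_toLp_sq_eq_dotProduct_self (v : ι → ℝ) : ‖WithLp.toLp 2 v‖ ^ 2 = v ⬝ᵥ v := by
  rw [← real_inner_self_eq_norm_sq, inner_toLp_toLp_eq_dotProduct]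

variable [DecidableEq ι] {R : Type*} [CommRing R]

theorem dotProduct_smul_one_add_vecMulVec_sub_mulVec (a2 μ : R) (ξ q v : ι → R) :
    v ⬝ᵥ (a2 • (1 + vecMulVec ξ ξ) - μ • vecMulVec q q) *ᵥ v =
      a2 * (v ⬝ᵥ v + (ξ ⬝ᵥ v) ^ 2) - μ * (q ⬝ᵥ v) ^ 2 := by
  simp only [sub_mulVec, smul_mulVec, add_mulVec, one_mulVec, vecMulVec_mulVec, op_smul_eq_smul,
    dotProduct_sub, dotProduct_smul, dotProduct_add, dotProduct_comm v ξ, dotProduct_comm v q,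
    smul_eq_mul, sq]

theorem posDef_smul_one_add_vecMulVec_sub [LinearOrder R] [IsStrictOrderedRing R] [StarRing R]
    [TrivialStar R] {a2 μ : R} {ξ q : ι → R} (hμ : μ ≤ 1)
    (h : ∀ v, v ≠ 0 → (q ⬝ᵥ v) ^ 2 < a2 * (v ⬝ᵥ v + (ξ ⬝ᵥ v) ^ 2)) :
    (a2 • (1 + vecMulVec ξ ξ) - μ • vecMulVec q q).PosDef := by
  refine .of_dotProduct_mulVec_pos ?_ fun v hv => ?_
  · exact ((isHermitian_one.add (isHermitian_vecMulVec_self ξ)).smul (.all a2)).sub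
      ((isHermitian_vecMulVec_self q).smul (.all μ))
  · rw [star_trivial, dotProduct_smul_one_add_vecMulVec_sub_mulVec, sub_pos]
    calc μ * (q ⬝ᵥ v) ^ 2
      _ ≤ (q ⬝ᵥ v) ^ 2 := mul_le_of_le_one_left (sq_nonneg _) hμ
      _ < a2 * (v ⬝ᵥ v + (ξ ⬝ᵥ v) ^ 2) := h v hv

theorem Fmu_elliptic_above_sonic_general (ξ p : ι → ℝ) (ψ χ a2 : ℝ)
    (hψ : 1 + ξ ⬝ᵥ ξ < ψ ^ 2) (hχ : χ = ψ - p ⬝ᵥ ξ) (ha2 : a2 = p ⬝ᵥ p + χ ^ 2 - 1) :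
    0 < a2 ∧ ∀ μ : ℝ, μ ≤ 1 →
      (a2 • (1 + vecMulVec ξ ξ) - μ • vecMulVec (p - χ • ξ) (p - χ • ξ)).PosDef := by
  subst hχ ha2
  have hψ' : 1 + ‖WithLp.toLp 2 ξ‖ ^ 2 < ψ ^ 2 := by rwa [norm_toLp_sq_eq_dotProduct_self]
  constructor
  · simpa only [norm_toLp_sq_eq_dotProduct_self, inner_toLp_toLp_eq_dotProduct, sub_pos] using
      one_lt_norm_sq_add_sub_inner_sq hψ' (WithLp.toLp 2 p)
  · refine fun μ hμ => posDef_smul_one_add_vecMulVec_sub hμ fun v hv => ?_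
    have hv' : WithLp.toLp 2 v ≠ 0 := (WithLp.toLp_eq_zero 2).not.mpr hv
    simpa only [norm_toLp_sq_eq_dotProduct_self, inner_toLp_toLp_eq_dotProduct,
      ← WithLp.toLp_smul, ← WithLp.toLp_sub] using inner_sub_smul_sq_lt hψ' (WithLp.toLp 2 p) hv'

end PrincipalPart

/-- Whenever `ψ > √(1+|ξ|²)`, one has `a² = |p|² + χ² − 1 > 0` and for every
`μ ∈ [0,1]` the principal-part matrix `a²(I₂+ξξᵀ) − μ qqᵀ` (with `q = p − χξ`) of the
equation `ℱ(μ,ψ) = 0` is positive definite, i.e. the equation is elliptic there. -/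
theorem Fmu_elliptic_above_sonic
    (ξ p : Fin 2 → ℝ) (ψ χ a2 : ℝ)
    (hψ : Real.sqrt (1 + (ξ 0) ^ 2 + (ξ 1) ^ 2) < ψ)
    (hχ : χ = ψ - (p 0 * ξ 0 + p 1 * ξ 1))
    (ha2def : a2 = (p 0) ^ 2 + (p 1) ^ 2 + χ ^ 2 - 1)
    (q : Fin 2 → ℝ) (hq : q = fun i => p i - χ * ξ i) :
    0 < a2 ∧
    ∀ μ : ℝ, 0 ≤ μ → μ ≤ 1 →
      (a2 • ((1 : Matrix (Fin 2) (Fin 2) ℝ) + Matrix.vecMulVec ξ ξ)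
          - μ • Matrix.vecMulVec q q).PosDef := by
  obtain ⟨ha2, hposDef⟩ := Fmu_elliptic_above_sonic_general ξ p ψ χ a2
    (by simpa only [vec2_dotProduct, ← sq, ← add_assoc] using lt_sq_of_sqrt_lt hψ)
    (by rw [hχ, vec2_dotProduct]) (by rw [ha2def, vec2_dotProduct, sq, sq])
  exact ⟨ha2, fun μ _ hμ => hq ▸ hposDef μ hμ⟩
end

section
/- Let u₀ > c₀ > 0, set β := arcsin(c₀/u₀) ∈ (0, π/2), and let α ∈ (0, β). Define the line ℓ := {t(cos β, sin β) : t ∈ ℝ} and the point P := u₀ cos β · (cos β, sin β). Then: (i) |P − (u₀, 0)| = c₀ and (P − (u₀, 0))·(cos β, sin β) = 0, so ℓ is tangent at P to the circle with center (u₀, 0) and radius c₀; (ii) with c₁, u₁, v₁ given by the shock-polar formulas, one has c₁ > 0, v₁ = u₁ tan α, ((u₁, v₁) − P)·(cos β, sin β) = 0, and |(u₁, v₁) − P| = c₁; hence ℓ is tangent at the same point P to the circle with center (u₁, v₁) and radius c₁. -/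
open Real

/-! With `β = arcsin (c₀ / u₀)` one has `c₀ = u₀ sin β` and `√(u₀² - c₀²) = u₀ cos β`, and the
shock-polar formulas become `(u₁, v₁) = q (cos α, sin α)` and `c₁ = q sin (β - α)`, where
`q = u₀ cos β / cos (β - α)`. So the downstream velocity has direction `α` and the same component
`u₀ cos β` along `ℓ` as the upstream velocity `(u₀, 0)`: both project orthogonally onto `P`, and
their distances to `ℓ`, `q sin (β - α)` and `u₀ sin β`, are the sound speeds `c₁` and `c₀`. -/

theorem mul_sin_arcsin_div {c u : ℝ} (hu : 0 < u) (hc : |c| ≤ u) :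
    u * sin (arcsin (c / u)) = c := by
  obtain ⟨hl, hr⟩ := abs_le.1 hc
  rw [sin_arcsin ((le_div_iff₀ hu).2 (by linarith)) ((div_le_one hu).2 hr),
    mul_div_cancel₀ c hu.ne']

theorem mul_cos_arcsin_div {u : ℝ} (hu : 0 < u) (c : ℝ) :
    u * cos (arcsin (c / u)) = √(u ^ 2 - c ^ 2) := by
  have hfactor : u ^ 2 - c ^ 2 = u ^ 2 * (1 - (c / u) ^ 2) := by field_simp
  rw [cos_arcsin, hfactor, sqrt_mul (sq_nonneg u), sqrt_sq hu.le]

theorem arcsin_div_mem_Ioo {c u : ℝ} (hc : 0 < c) (hcu : c < u) :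
    arcsin (c / u) ∈ Set.Ioo 0 (π / 2) :=
  have hu : 0 < u := hc.trans hcu
  ⟨arcsin_pos.2 (div_pos hc hu), arcsin_lt_pi_div_two.2 ((div_lt_one hu).2 hcu)⟩

theorem cos_add_sin_mul_tan {α : ℝ} (hα : cos α ≠ 0) (β : ℝ) :
    cos β + sin β * tan α = cos (β - α) / cos α := by
  rw [cos_sub, tan_eq_sin_div_cos]
  field_simp

theorem sin_sub_tan_mul_cos {α : ℝ} (hα : cos α ≠ 0) (β : ℝ) :
    sin β - tan α * cos β = sin (β - α) / cos α := by
  rw [sin_sub, tan_eq_sin_div_cos]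
  field_simp

section PolarProjection

variable (r β θ : ℝ)

theorem polar_fst_sub_proj :
    r * cos θ - r * cos (β - θ) * cos β = r * sin (β - θ) * sin β := by
  have h : cos θ = cos β * cos (β - θ) + sin β * sin (β - θ) := by
    rw [← cos_sub, sub_sub_cancel]
  linear_combination r * h

theorem polar_snd_sub_proj :
    r * sin θ - r * cos (β - θ) * sin β = -(r * sin (β - θ) * cos β) := by
  have h : sin θ = sin β * cos (β - θ) - cos β * sin (β - θ) := by
    rw [← sin_sub, sub_sub_cancel]
  linear_combination r * h

theorem polar_sub_proj_orthogonal :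
    (r * cos θ - r * cos (β - θ) * cos β) * cos β +
      (r * sin θ - r * cos (β - θ) * sin β) * sin β = 0 := by
  rw [polar_fst_sub_proj, polar_snd_sub_proj]
  ring

theorem proj_sub_horizontal_orthogonal :
    (r * cos β * cos β - r) * cos β + r * cos β * sin β * sin β = 0 := by
  have h := polar_sub_proj_orthogonal r β 0
  simp only [cos_zero, sin_zero, sub_zero] at h
  linear_combination -h

variable {r β θ}

theorem sqrt_polar_sub_proj (h : 0 ≤ r * sin (β - θ)) :
    √((r * cos θ - r * cos (β - θ) * cos β) ^ 2 +
      (r * sin θ - r * cos (β - θ) * sin β) ^ 2) = r * sin (β - θ) := by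
  have hsq : (r * sin (β - θ) * sin β) ^ 2 + (-(r * sin (β - θ) * cos β)) ^ 2 =
      (r * sin (β - θ)) ^ 2 := by
    linear_combination (r * sin (β - θ)) ^ 2 * sin_sq_add_cos_sq β
  rw [polar_fst_sub_proj, polar_snd_sub_proj, hsq, sqrt_sq h]

theorem sqrt_proj_sub_horizontal (h : 0 ≤ r * sin β) :
    √((r * cos β * cos β - r) ^ 2 + (r * cos β * sin β) ^ 2) = r * sin β := by
  simpa [sub_sq_comm] using sqrt_polar_sub_proj (θ := 0) (by simpa using h)

end PolarProjection

/-- The flow speed behind a straight shock of inclination `β` that deflects a horizontal stream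
of speed `u` by the angle `α`, determined by conservation of the velocity component along the
shock. It has the junk value `0` when `cos (β - α) = 0`. -/
noncomputable def downstreamSpeed (u α β : ℝ) : ℝ :=
  u * cos β / cos (β - α)

section Downstream

variable {u α β : ℝ}

theorem downstreamSpeed_mul_cos_sub (h : cos (β - α) ≠ 0) :
    downstreamSpeed u α β * cos (β - α) = u * cos β :=
  div_mul_cancel₀ _ h

theorem downstreamSpeed_pos (hu : 0 < u) (hβ : 0 < cos β) (hβα : 0 < cos (β - α)) :
    0 < downstreamSpeed u α β :=
  div_pos (mul_pos hu hβ) hβα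

theorem shockPolar_denom (hα : cos α ≠ 0) :
    u * cos β + u * sin β * tan α = u * (cos (β - α) / cos α) := by
  rw [← cos_add_sin_mul_tan hα]
  ring

theorem shockPolar_velocity_fst (hu : u ≠ 0) (hα : cos α ≠ 0) :
    u * (u * cos β) / (u * cos β + u * sin β * tan α) = downstreamSpeed u α β * cos α := by
  rw [shockPolar_denom hα, mul_div_mul_left _ _ hu, div_div_eq_mul_div, downstreamSpeed,
    div_mul_eq_mul_div]

theorem shockPolar_velocity_snd (hu : u ≠ 0) (hα : cos α ≠ 0) :
    u * tan α * (u * cos β) / (u * cos β + u * sin β * tan α) =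
      downstreamSpeed u α β * sin α := by
  rw [mul_right_comm u, mul_div_right_comm, shockPolar_velocity_fst hu hα, mul_assoc,
    mul_comm (cos α), tan_mul_cos hα]

theorem shockPolar_soundSpeed (hu : u ≠ 0) (hα : cos α ≠ 0) :
    u * cos β * (u * sin β - tan α * (u * cos β)) / (u * sin β * tan α + u * cos β) =
      downstreamSpeed u α β * sin (β - α) := by
  have hnum : u * cos β * (u * sin β - tan α * (u * cos β)) =
      u * (u * cos β) * (sin (β - α) / cos α) := by
    rw [← sin_sub_tan_mul_cos hα]
    ring
  rw [hnum, add_comm (u * sin β * tan α), mul_div_right_comm, shockPolar_velocity_fst hu hα,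
    mul_assoc, mul_div_cancel₀ _ hα]

end Downstream

/-- `β - π / 2 < α < β` says that the downstream velocity points forward along the shock line and
lies below it; `α < 0` is an expansive deflection. -/
theorem chaplygin_shock_polar_tangency_general
    (u0 c0 α β c1 u1 v1 : ℝ)
    (hc0 : 0 < c0) (hu0 : c0 < u0)
    (hβ : β = arcsin (c0 / u0))
    (hα : β - π / 2 < α) (hαβ : α < β)
    (hc1 : c1 = √(u0 ^ 2 - c0 ^ 2) *
        (c0 - tan α * √(u0 ^ 2 - c0 ^ 2)) /
        (c0 * tan α + √(u0 ^ 2 - c0 ^ 2)))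
    (hu1 : u1 = u0 * √(u0 ^ 2 - c0 ^ 2) /
        (√(u0 ^ 2 - c0 ^ 2) + c0 * tan α))
    (hv1 : v1 = u0 * tan α * √(u0 ^ 2 - c0 ^ 2) /
        (√(u0 ^ 2 - c0 ^ 2) + c0 * tan α))
    (P : ℝ × ℝ)
    (hP : P = (u0 * cos β * cos β, u0 * cos β * sin β)) :
    (0 < β ∧ β < π / 2) ∧
    √((P.1 - u0) ^ 2 + P.2 ^ 2) = c0 ∧
    (P.1 - u0) * cos β + P.2 * sin β = 0 ∧
    0 < c1 ∧
    v1 = u1 * tan α ∧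
    (u1 - P.1) * cos β + (v1 - P.2) * sin β = 0 ∧
    √((u1 - P.1) ^ 2 + (v1 - P.2) ^ 2) = c1 := by
  have hu : 0 < u0 := hc0.trans hu0
  have ⟨hβ_pos, hβ_lt⟩ : β ∈ Set.Ioo 0 (π / 2) := hβ ▸ arcsin_div_mem_Ioo hc0 hu0
  have hc0_eq : u0 * sin β = c0 := hβ ▸ mul_sin_arcsin_div hu ((abs_of_pos hc0).trans_le hu0.le)
  have hsqrt : √(u0 ^ 2 - c0 ^ 2) = u0 * cos β := hβ ▸ (mul_cos_arcsin_div hu c0).symm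
  have hcosα : cos α ≠ 0 := (cos_pos_of_mem_Ioo ⟨by linarith, by linarith⟩).ne'
  have hcosβ : 0 < cos β := cos_pos_of_mem_Ioo ⟨by linarith, by linarith⟩
  have hcosβα : 0 < cos (β - α) := cos_pos_of_mem_Ioo ⟨by linarith, by linarith⟩
  have hnormal_pos : 0 < downstreamSpeed u0 α β * sin (β - α) :=
    mul_pos (downstreamSpeed_pos hu hcosβ hcosβα)
      (sin_pos_of_pos_of_lt_pi (by linarith) (by linarith))
  rw [hsqrt, ← hc0_eq] at hc1 hu1 hv1
  rw [shockPolar_soundSpeed hu.ne' hcosα] at hc1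
  rw [shockPolar_velocity_fst hu.ne' hcosα] at hu1
  rw [shockPolar_velocity_snd hu.ne' hcosα] at hv1
  have hproj := downstreamSpeed_mul_cos_sub (u := u0) hcosβα.ne'
  subst hP
  refine ⟨⟨hβ_pos, hβ_lt⟩, ?_, ?_, hc1 ▸ hnormal_pos, ?_, ?_, ?_⟩
  · exact (sqrt_proj_sub_horizontal (hc0_eq ▸ hc0.le)).trans hc0_eq
  · exact proj_sub_horizontal_orthogonal u0 β
  · rw [hu1, hv1, mul_assoc, mul_comm (cos α), tan_mul_cos hcosα]
  · simpa only [hu1, hv1, hproj] using polar_sub_proj_orthogonal (downstreamSpeed u0 α β) β α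
  · simpa only [hu1, hv1, hc1, hproj] using sqrt_polar_sub_proj hnormal_pos.le

/-- Shock polar geometry for a Chaplygin gas: the shock line
`ℓ = {t(cos β, sin β)}` with `β = arcsin(c₀/u₀)` is tangent at
`P = u₀ cos β (cos β, sin β)` to the circle of center `(u₀,0)` and radius `c₀`, and,
with the downstream state `(c₁, u₁, v₁)` given by the shock-polar formulas, `c₁ > 0`,
`v₁ = u₁ tan α`, and `ℓ` is also tangent at the same point `P` to the circle of
center `(u₁,v₁)` and radius `c₁`. -/
theorem chaplygin_shock_polar_tangency
    (u0 c0 α β c1 u1 v1 : ℝ)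
    (hc0 : 0 < c0) (hu0 : c0 < u0)
    (hβ : β = Real.arcsin (c0 / u0))
    (hα0 : 0 < α) (hαβ : α < β)
    (hc1 : c1 = Real.sqrt (u0 ^ 2 - c0 ^ 2) *
        (c0 - Real.tan α * Real.sqrt (u0 ^ 2 - c0 ^ 2)) /
        (c0 * Real.tan α + Real.sqrt (u0 ^ 2 - c0 ^ 2)))
    (hu1 : u1 = u0 * Real.sqrt (u0 ^ 2 - c0 ^ 2) /
        (Real.sqrt (u0 ^ 2 - c0 ^ 2) + c0 * Real.tan α))
    (hv1 : v1 = u0 * Real.tan α * Real.sqrt (u0 ^ 2 - c0 ^ 2) /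
        (Real.sqrt (u0 ^ 2 - c0 ^ 2) + c0 * Real.tan α))
    (P : ℝ × ℝ)
    (hP : P = (u0 * Real.cos β * Real.cos β, u0 * Real.cos β * Real.sin β)) :
    (0 < β ∧ β < π / 2) ∧
    -- (i) `ℓ` is tangent at `P` to the circle with center `(u₀,0)` and radius `c₀`
    Real.sqrt ((P.1 - u0) ^ 2 + P.2 ^ 2) = c0 ∧
    (P.1 - u0) * Real.cos β + P.2 * Real.sin β = 0 ∧
    -- (ii) the downstream circle is tangent to `ℓ` at the same point `P`
    0 < c1 ∧
    v1 = u1 * Real.tan α ∧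
    (u1 - P.1) * Real.cos β + (v1 - P.2) * Real.sin β = 0 ∧
    Real.sqrt ((u1 - P.1) ^ 2 + (v1 - P.2) ^ 2) = c1 := by
  have hβ_lt : β < π / 2 := hβ ▸ (arcsin_div_mem_Ioo hc0 hu0).2
  exact chaplygin_shock_polar_tangency_general u0 c0 α β c1 u1 v1 hc0 hu0 hβ (by linarith) hαβ
    hc1 hu1 hv1 P hP
end

section
/- Let u₀ > c₀ > 0 and α ∈ (0, π/2) with c₀ tan α + √(u₀² − c₀²) > 0, and let c₁ := √(u₀² − c₀²) · (c₀ − tan α · √(u₀² − c₀²)) / (c₀ tan α + √(u₀² − c₀²)) be the downstream sound speed of the Chaplygin shock polar. Then c₁ > 0 if and only if u₀ sin α < c₀. Thus the no-concentration condition c₀ < u₀ < c₀ / sin α is exactly the condition on a supersonic oncoming flow under which the downstream sound speed behind the oblique shock is positive. -/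
open Real

/-! In terms of the Mach angle `μ`, defined by `u₀ sin μ = c₀` and `u₀ cos μ = √(u₀² - c₀²)`, the
addition formulas turn the downstream sound speed into `c₁ = √(u₀² - c₀²) tan (μ - α)`. Positivity
of the denominator means `|μ - α| < π / 2`, so `c₁` is positive exactly when `α < μ`, that is, when
`u₀ sin α < u₀ sin μ = c₀`. -/

theorem abs_lt_pi_div_two_of_cos_pos {x : ℝ} (hx : |x| ≤ π + π / 2) (hcos : 0 < cos x) :
    |x| < π / 2 := by
  by_contra! h
  rw [← cos_abs] at hcos
  exact hcos.not_ge (cos_nonpos_of_pi_div_two_le_of_le h hx)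

theorem tan_pos_iff_of_abs_lt {x : ℝ} (hx : |x| < π / 2) : 0 < tan x ↔ 0 < x := by
  have zero_mem : (0 : ℝ) ∈ Set.Ioo (-(π / 2)) (π / 2) := by simp [pi_pos]
  simpa only [tan_zero] using strictMonoOn_tan.lt_iff_lt zero_mem (abs_lt.mp hx)

/-- The Mach angle `μ` of a flow with speed `u` and sound speed `c`, given by `sin μ = c / u`.
A negative `c` is allowed and gives a negative angle. -/
noncomputable def machAngle (u c : ℝ) : ℝ := arcsin (c / u)

/-- The sound speed `c₁` behind an oblique shock in a Chaplygin gas, as a function of the upstream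
speed `u`, the upstream sound speed `c` and the deflection angle `α`. Non-positive values encode
concentration; a vanishing denominator gives the junk value `0`. -/
noncomputable def chaplyginDownstreamSoundSpeed (u c α : ℝ) : ℝ :=
  √(u ^ 2 - c ^ 2) * (c - tan α * √(u ^ 2 - c ^ 2)) / (c * tan α + √(u ^ 2 - c ^ 2))

section MachAngle

variable {u c α : ℝ}

theorem abs_machAngle_le_pi_div_two (u c : ℝ) : |machAngle u c| ≤ π / 2 :=
  abs_le.mpr (arcsin_mem_Icc (c / u))

theorem mul_sin_machAngle (hu : 0 < u) (hcu : |c| ≤ u) : u * sin (machAngle u c) = c := by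
  have hratio : |c / u| ≤ 1 := by rwa [abs_div, abs_of_pos hu, div_le_one₀ hu]
  rw [machAngle, sin_arcsin (abs_le.mp hratio).1 (abs_le.mp hratio).2, mul_div_cancel₀ c hu.ne']

theorem mul_cos_machAngle (hu : 0 < u) : u * cos (machAngle u c) = √(u ^ 2 - c ^ 2) := by
  have hfactor : u ^ 2 - c ^ 2 = u ^ 2 * (1 - (c / u) ^ 2) := by field_simp
  rw [machAngle, cos_arcsin, hfactor, sqrt_mul (sq_nonneg u), sqrt_sq hu.le]

theorem lt_machAngle_iff (hu : 0 < u) (hα : α ∈ Set.Ico (-(π / 2)) (π / 2)) :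
    α < machAngle u c ↔ u * sin α < c := by
  rw [machAngle, lt_arcsin_iff_sin_lt' hα, lt_div_iff₀' hu]

theorem sub_tan_mul_sqrt_eq (hu : 0 < u) (hcu : |c| ≤ u) (hα : cos α ≠ 0) :
    c - tan α * √(u ^ 2 - c ^ 2) = u * sin (machAngle u c - α) / cos α := by
  rw [sin_sub, mul_sub, ← mul_assoc, ← mul_assoc, mul_sin_machAngle hu hcu, mul_cos_machAngle hu,
    tan_eq_sin_div_cos]
  field_simp

theorem mul_tan_add_sqrt_eq (hu : 0 < u) (hcu : |c| ≤ u) (hα : cos α ≠ 0) :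
    c * tan α + √(u ^ 2 - c ^ 2) = u * cos (machAngle u c - α) / cos α := by
  rw [cos_sub, mul_add, ← mul_assoc, ← mul_assoc, mul_sin_machAngle hu hcu, mul_cos_machAngle hu,
    tan_eq_sin_div_cos]
  field_simp
  ring

theorem chaplyginDownstreamSoundSpeed_eq_sqrt_mul_tan (hu : 0 < u) (hcu : |c| ≤ u)
    (hα : cos α ≠ 0) :
    chaplyginDownstreamSoundSpeed u c α = √(u ^ 2 - c ^ 2) * tan (machAngle u c - α) := by
  rw [chaplyginDownstreamSoundSpeed, mul_div_assoc, sub_tan_mul_sqrt_eq hu hcu hα,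
    mul_tan_add_sqrt_eq hu hcu hα, div_div_div_cancel_right₀ hα, mul_div_mul_left _ _ hu.ne',
    ← tan_eq_sin_div_cos]

theorem abs_machAngle_sub_lt_pi_div_two (hu : 0 < u) (hcu : |c| ≤ u) (hα : |α| < π / 2)
    (hden : 0 < c * tan α + √(u ^ 2 - c ^ 2)) : |machAngle u c - α| < π / 2 := by
  have hcosα : 0 < cos α := cos_pos_of_mem_Ioo (abs_lt.mp hα)
  have hcos : 0 < cos (machAngle u c - α) := by
    rwa [mul_tan_add_sqrt_eq hu hcu hcosα.ne', div_pos_iff_of_pos_right hcosα,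
      mul_pos_iff_of_pos_left hu] at hden
  refine abs_lt_pi_div_two_of_cos_pos ?_ hcos
  linarith [abs_sub (machAngle u c) α, abs_machAngle_le_pi_div_two u c, pi_pos]

theorem chaplygin_no_concentration_iff_general (hcu : |c| < u) (hα : |α| < π / 2)
    (hden : 0 < c * tan α + √(u ^ 2 - c ^ 2)) :
    0 < chaplyginDownstreamSoundSpeed u c α ↔ u * sin α < c := by
  have hu : 0 < u := (abs_nonneg c).trans_lt hcu
  have hsqrt : 0 < √(u ^ 2 - c ^ 2) := by
    rw [sqrt_pos, sub_pos, sq_lt_sq, abs_of_pos hu]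
    exact hcu
  have hcosα : cos α ≠ 0 := (cos_pos_of_mem_Ioo (abs_lt.mp hα)).ne'
  rw [chaplyginDownstreamSoundSpeed_eq_sqrt_mul_tan hu hcu.le hcosα,
    mul_pos_iff_of_pos_left hsqrt,
    tan_pos_iff_of_abs_lt (abs_machAngle_sub_lt_pi_div_two hu hcu.le hα hden), sub_pos,
    lt_machAngle_iff hu (Set.Ioo_subset_Ico_self (abs_lt.mp hα))]

end MachAngle

/-- No-concentration criterion for the Chaplygin shock polar: for a supersonic
oncoming flow (`u₀ > c₀ > 0`) and deflection angle `α ∈ (0, π/2)`, the downstream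
sound speed `c₁` is positive if and only if `u₀ sin α < c₀`, i.e. exactly under the
no-concentration condition `c₀ < u₀ < c₀/sin α`. -/
theorem chaplygin_no_concentration_iff
    (u0 c0 α c1 : ℝ)
    (hc0 : 0 < c0) (hu0 : c0 < u0)
    (hα0 : 0 < α) (hα1 : α < π / 2)
    (hden : 0 < c0 * Real.tan α + Real.sqrt (u0 ^ 2 - c0 ^ 2))
    (hc1 : c1 = Real.sqrt (u0 ^ 2 - c0 ^ 2) *
        (c0 - Real.tan α * Real.sqrt (u0 ^ 2 - c0 ^ 2)) /
        (c0 * Real.tan α + Real.sqrt (u0 ^ 2 - c0 ^ 2))) :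
    0 < c1 ↔ u0 * Real.sin α < c0 := by
  subst hc1
  exact chaplygin_no_concentration_iff_general (by rwa [abs_of_pos hc0])
    (by rwa [abs_of_pos hα0]) hden
end
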